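/- arXiv:1404.6939 — 2 statements merged into one kernel-verified Lean document; each statement's English description precedes it below -/
import Mathlib

section
/- Let (R,𝔪) be a Noetherian local ring and let a finite group G act on R by ring automorphisms, with |G| invertible in R. For j ≥ 1 set 𝔫_j = 𝔪^j ∩ R^G. Then the filtration {𝔫_j} defines on R^G the same topology as the 𝔫-adic topology, where 𝔫 = 𝔪 ∩ R^G: one has 𝔫^j ⊆ 𝔫_j for all j ≥ 1, and for every t ≥ 1 there exists j ≥ 1 with 𝔫_j ⊆ 𝔫^t. -/
/-- The subring of invariants `R^G` of a ring `R` under an action of a group `G`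
by ring automorphisms. -/
def fixedSubring (G R : Type*) [Group G] [CommRing R] [MulSemiringAction G R] :
    Subring R where
  carrier := {x | ∀ σ : G, σ • x = x}
  mul_mem' := by intro a b ha hb σ; rw [smul_mul', ha σ, hb σ]
  one_mem' := by intro σ; exact smul_one σ
  add_mem' := by intro a b ha hb σ; rw [smul_add, ha σ, hb σ]
  zero_mem' := by intro σ; exact smul_zero σ
  neg_mem' := by intro a ha σ; rw [smul_neg, ha σ]

/-!
Let `J = (I ∩ R^G)R` for a `G`-stable ideal `I`. Given a family `a : G → I` and `τ ∈ G`, the product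
`∏ σ, (a σ - τσ • a σ)` vanishes because of its factor at `σ = τ⁻¹`. Expand it over the subsets
`S ⊆ G` and sum over `τ`: each `S ≠ ∅` contributes a multiple of the trace of
`∏ σ ∈ S, σ • a σ ∈ I`, while `S = ∅` contributes `|G| ∏ σ, a σ`. Since `|G|` is a unit,
`I ^ |G| ⊆ J` (Fogarty, Benson). The trace divided by `|G|` is an `R^G`-linear retraction of
`R^G ⊆ R`, so contracting `I ^ (|G| t) ⊆ J ^ t` to `R^G` gives
`I ^ (|G| t) ∩ R^G ⊆ (I ∩ R^G) ^ t`.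
-/

section

variable {A B : Type*} [CommSemiring A] [CommSemiring B]

theorem linearMap_apply_mem_of_mem_map_algebraMap [Algebra A B] (f : B →ₗ[A] A) {I : Ideal A}
    {b : B} (hb : b ∈ I.map (algebraMap A B)) : f b ∈ I := by
  have hb' : b ∈ I • (⊤ : Submodule A B) := by rwa [Ideal.smul_top_eq_map]
  have hmap : Submodule.map f (I • (⊤ : Submodule A B)) ≤ I := by
    rw [Submodule.map_smul'']
    exact Submodule.smul_le.2 fun r hr y _ ↦ I.mul_mem_right y hr
  exact hmap (Submodule.mem_map_of_mem hb')

open scoped Pointwise in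
theorem pow_card_le_of_forall_prod_mem {ι : Type*} [Fintype ι] {I J : Ideal A}
    (h : ∀ a : ι → A, (∀ i, a i ∈ I) → ∏ i, a i ∈ J) : I ^ Fintype.card ι ≤ J := by
  have hpow : I ^ Fintype.card ι = Ideal.span (∏ _i : ι, (I : Set A)) := by
    rw [← Ideal.prod_span, Ideal.span_eq, Finset.prod_const, Finset.card_univ]
  rw [hpow, Ideal.span_le]
  intro x hx
  obtain ⟨a, ha, rfl⟩ := (Set.mem_fintype_prod _ _).1 hx
  exact h a ha

end

theorem smul_mem_maximalIdeal {G R : Type*} [Group G] [CommSemiring R] [IsLocalRing R]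
    [MulSemiringAction G R] (σ : G) {x : R} (hx : x ∈ IsLocalRing.maximalIdeal R) :
    σ • x ∈ IsLocalRing.maximalIdeal R :=
  (map_mem_nonunits_iff (MulSemiringAction.toRingEquiv G R σ) x).2 hx

namespace fixedSubring

variable {G R : Type*} [Group G] [CommRing R] [MulSemiringAction G R]

theorem isUnit_of_isUnit_coe {a : fixedSubring G R} (ha : IsUnit (a : R)) : IsUnit a := by
  obtain ⟨u, hu⟩ := ha.exists_right_inv
  have hu_fixed : u ∈ fixedSubring G R := fun σ ↦ ha.mul_left_cancel <|
    calc (a : R) * σ • u = σ • (a * u) := by rw [smul_mul', a.2 σ]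
      _ = a * u := by rw [hu, smul_one]
  exact IsUnit.of_mul_eq_one ⟨u, hu_fixed⟩ (Subtype.ext hu)

variable [Fintype G]

variable (G R) in
/-- The trace (transfer) `x ↦ ∑ σ, σ • x` from `R` to its ring of invariants, bundled as a map of
modules over the invariants. It is not divided by `|G|`, so that it exists over every `R`. -/
def trace : R →ₗ[fixedSubring G R] fixedSubring G R where
  toFun x := ⟨∑ σ : G, σ • x, fun τ ↦ by
    simp only [Finset.smul_sum, smul_smul]
    exact Equiv.sum_comp (Equiv.mulLeft τ) fun σ ↦ σ • x⟩
  map_add' x y := Subtype.ext <| by simp [Finset.sum_add_distrib]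
  map_smul' a x := Subtype.ext <| by
    have ha : ∀ σ : G, σ • (a : R) = a := a.2
    simp [Subring.smul_def, ha, Finset.mul_sum]

theorem coe_trace (x : R) : (trace G R x : R) = ∑ σ : G, σ • x := rfl

theorem trace_coe (a : fixedSubring G R) : trace G R a = Fintype.card G * a := by
  have ha : ∀ σ : G, σ • (a : R) = a := a.2
  ext
  simp [coe_trace, ha]

theorem comap_map_subtype (hG : IsUnit (Fintype.card G : R)) (I : Ideal (fixedSubring G R)) :
    (I.map (fixedSubring G R).subtype).comap (fixedSubring G R).subtype = I := by
  refine le_antisymm (fun a ha ↦ ?_) Ideal.le_comap_map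
  have hcard : IsUnit (Fintype.card G : fixedSubring G R) :=
    isUnit_of_isUnit_coe (by simpa using hG)
  have htrace : trace G R a ∈ I := linearMap_apply_mem_of_mem_map_algebraMap (trace G R) ha
  rw [trace_coe] at htrace
  exact (I.unit_mul_mem_iff_mem hcard).1 htrace

theorem sum_finset_mul_trace_eq_zero [DecidableEq G] (a : G → R) :
    ∑ S : Finset G, (-1) ^ S.card * (∏ σ ∈ Sᶜ, a σ) * (trace G R (∏ σ ∈ S, σ • a σ) : R) = 0 := by
  have hprod (τ : G) : ∏ σ, (a σ - τ • σ • a σ) = 0 :=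
    Finset.prod_eq_zero (Finset.mem_univ τ⁻¹) (by simp)
  calc
    _ = ∑ τ : G, ∏ σ, (a σ - τ • σ • a σ) := by
      simp only [Finset.prod_sub, Finset.powerset_univ, coe_trace, Finset.mul_sum,
        Finset.smul_prod', Finset.compl_eq_univ_sdiff]
      exact Finset.sum_comm
    _ = 0 := Finset.sum_eq_zero fun τ _ ↦ hprod τ

variable {I : Ideal R}

theorem coe_trace_mem_map_comap (hI : ∀ σ : G, ∀ x ∈ I, σ • x ∈ I) {x : R} (hx : x ∈ I) :
    (trace G R x : R) ∈ (I.comap (fixedSubring G R).subtype).map (fixedSubring G R).subtype := by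
  have hmem : trace G R x ∈ I.comap (fixedSubring G R).subtype := I.sum_mem fun σ _ ↦ hI σ x hx
  exact Ideal.mem_map_of_mem (fixedSubring G R).subtype hmem

theorem card_mul_prod_mem_map_comap (hI : ∀ σ : G, ∀ x ∈ I, σ • x ∈ I) {a : G → R}
    (ha : ∀ σ, a σ ∈ I) :
    Fintype.card G * ∏ σ, a σ ∈
      (I.comap (fixedSubring G R).subtype).map (fixedSubring G R).subtype := by
  classical
  have hsum := sum_finset_mul_trace_eq_zero a
  rw [← Finset.add_sum_erase _ _ (Finset.mem_univ ∅)] at hsum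
  have hempty : (-1) ^ (∅ : Finset G).card * (∏ σ ∈ ∅ᶜ, a σ) *
      (trace G R (∏ σ ∈ ∅, σ • a σ) : R) = Fintype.card G * ∏ σ, a σ := by
    simp [coe_trace, mul_comm]
  rw [← hempty, eq_neg_of_add_eq_zero_left hsum]
  refine neg_mem (Ideal.sum_mem _ fun S hS ↦ Ideal.mul_mem_left _ _ ?_)
  obtain ⟨σ, hσ⟩ := Finset.nonempty_iff_ne_empty.2 (Finset.ne_of_mem_erase hS)
  exact coe_trace_mem_map_comap hI (I.prod_mem hσ (hI σ _ (ha σ)))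

theorem pow_card_le_map_comap (hG : IsUnit (Fintype.card G : R))
    (hI : ∀ σ : G, ∀ x ∈ I, σ • x ∈ I) :
    I ^ Fintype.card G ≤
      (I.comap (fixedSubring G R).subtype).map (fixedSubring G R).subtype :=
  pow_card_le_of_forall_prod_mem fun _ ha ↦
    (Ideal.unit_mul_mem_iff_mem _ hG).1 (card_mul_prod_mem_map_comap hI ha)

theorem comap_pow_card_mul_le (hG : IsUnit (Fintype.card G : R))
    (hI : ∀ σ : G, ∀ x ∈ I, σ • x ∈ I) (t : ℕ) :
    (I ^ (Fintype.card G * t)).comap (fixedSubring G R).subtype ≤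
      (I.comap (fixedSubring G R).subtype) ^ t := by
  set 𝔫 := I.comap (fixedSubring G R).subtype
  have hpow : I ^ (Fintype.card G * t) ≤ (𝔫 ^ t).map (fixedSubring G R).subtype := by
    rw [pow_mul, Ideal.map_pow]
    exact Ideal.pow_right_mono (pow_card_le_map_comap hG hI) t
  exact (Ideal.comap_mono hpow).trans (comap_map_subtype hG _).le

end fixedSubring

theorem contraction_filtration_equiv_adic_topology_general
    {R G : Type*} [CommRing R] [Group G] [Fintype G] [MulSemiringAction G R]
    (hG : IsUnit (Fintype.card G : R)) {I : Ideal R} (hI : ∀ σ : G, ∀ x ∈ I, σ • x ∈ I) :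
    (∀ j : ℕ, (I.comap (fixedSubring G R).subtype) ^ j ≤
      (I ^ j).comap (fixedSubring G R).subtype) ∧
    (∀ t : ℕ, (I ^ (Fintype.card G * t)).comap (fixedSubring G R).subtype ≤
      (I.comap (fixedSubring G R).subtype) ^ t) :=
  ⟨Ideal.le_comap_pow _, fixedSubring.comap_pow_card_mul_le hG hI⟩

/-- For `𝔫_j = 𝔪^j ∩ R^G` and `𝔫 = 𝔪 ∩ R^G`: one has `𝔫^j ⊆ 𝔫_j` for all `j ≥ 1`,
and for every `t ≥ 1` there is `j ≥ 1` with `𝔫_j ⊆ 𝔫^t`; so the filtration `{𝔫_j}`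
defines the `𝔫`-adic topology on `R^G`. -/
theorem contraction_filtration_equiv_adic_topology
    (R : Type) [CommRing R] [IsNoetherianRing R] [IsLocalRing R]
    (G : Type) [Group G] [Fintype G] [MulSemiringAction G R]
    (hG : IsUnit ((Fintype.card G : R))) :
    (∀ j : ℕ, 1 ≤ j →
      (Ideal.comap (fixedSubring G R).subtype (IsLocalRing.maximalIdeal R)) ^ j ≤
        Ideal.comap (fixedSubring G R).subtype ((IsLocalRing.maximalIdeal R) ^ j)) ∧
    (∀ t : ℕ, 1 ≤ t → ∃ j : ℕ, 1 ≤ j ∧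
      Ideal.comap (fixedSubring G R).subtype ((IsLocalRing.maximalIdeal R) ^ j) ≤
        (Ideal.comap (fixedSubring G R).subtype (IsLocalRing.maximalIdeal R)) ^ t) := by
  have h := contraction_filtration_equiv_adic_topology_general hG fun (σ : G) _ ↦
    smul_mem_maximalIdeal σ
  exact ⟨fun j _ ↦ h.1 j, fun t ht ↦ ⟨_, Nat.mul_pos Fintype.card_pos ht, h.2 t⟩⟩
end

section
/- Let (R,𝔪) be a complete Noetherian local ring and let a finite group G act on R by ring automorphisms, with |G| invertible in R. Then every R-module E of finite length is finitely generated as an R^G-module. -/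
/-! Reduce to simple modules `B ⧸ Q`, on which the stabilizer `D` of `Q` acts. By the Chinese
remainder theorem, `b` can be chosen in any given class modulo `Q` so that `σ • b ∈ Q` for `σ ∉ D`;
then `∑ σ, σ • b` is an invariant of `B` which is congruent modulo `Q` to the sum over `D` alone. As
`|D|` divides the unit `|G|`, every `D`-invariant of the field `B ⧸ Q` therefore comes from an
invariant of `B`, and `B ⧸ Q` is finite over its `D`-invariants by Artin's theorem. -/

instance fixedSubring.isInvariant (G R : Type*) [Group G] [CommRing R] [MulSemiringAction G R] :
    Algebra.IsInvariant (fixedSubring G R) R G :=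
  ⟨fun x hx ↦ ⟨⟨x, hx⟩, rfl⟩⟩

theorem moduleFinite_of_isFiniteLength {A R E : Type*} [CommRing A] [Ring R] [Algebra A R]
    [AddCommGroup E] [Module R E] [instA : Module A E] [tower : IsScalarTower A R E]
    (h : ∀ I : Ideal R, I.IsMaximal → Module.Finite A (R ⧸ I)) (hE : IsFiniteLength R E) :
    Module.Finite A E := by
  induction hE generalizing instA tower with
  | of_subsingleton => infer_instance
  | @of_simple_quotient E _ _ N hs _ ih =>
    obtain ⟨I, hI, ⟨e⟩⟩ := isSimpleModule_iff_quot_maximal.mp hs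
    have : Module.Finite A (R ⧸ I) := h I hI
    have : Module.Finite A (E ⧸ N.restrictScalars A) :=
      .equiv (e.symm.restrictScalars A ≪≫ₗ (Submodule.Quotient.restrictScalarsEquiv A N).symm)
    have : Module.Finite A (N.restrictScalars A) := ih
    exact .of_submodule_quotient (N.restrictScalars A)

theorem moduleFinite_of_isInvariant_field (A L G : Type*) [CommSemiring A] [Field L] [Algebra A L]
    [Group G] [Finite G] [MulSemiringAction G L] [Algebra.IsInvariant A L G] :
    Module.Finite A L := by
  obtain ⟨t, ht⟩ := Module.Finite.fg_top (R := FixedPoints.subfield G L) (M := L)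
  refine ⟨t, Submodule.eq_top_iff'.mpr fun x ↦ ?_⟩
  have hx : x ∈ Submodule.span (FixedPoints.subfield G L) (t : Set L) := ht ▸ Submodule.mem_top
  induction hx using Submodule.span_induction with
  | mem x hx => exact Submodule.subset_span hx
  | zero => exact Submodule.zero_mem _
  | add x y _ _ hx hy => exact Submodule.add_mem _ hx hy
  | smul c x _ hx =>
    obtain ⟨a, ha⟩ := Algebra.IsInvariant.isInvariant (A := A) (c : L) c.2
    have hc : c • x = a • x := by rw [Algebra.smul_def a, ha]; rfl
    exact hc ▸ Submodule.smul_mem _ a hx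

theorem smul_sum_smul {G M : Type*} [Group G] [Fintype G] [AddCommMonoid M]
    [DistribMulAction G M] (σ : G) (x : M) : σ • ∑ τ : G, τ • x = ∑ τ : G, τ • x := by
  simp only [Finset.smul_sum, smul_smul]
  exact Fintype.sum_equiv (Equiv.mulLeft σ) _ _ fun _ ↦ rfl

section MaximalIdeal

open scoped Pointwise
open MulAction (stabilizer)

variable {B G : Type*} [CommRing B] [Group G] [MulSemiringAction G B] (Q : Ideal B)

/-- The action of the decomposition group of `Q` on `B ⧸ Q`. Taking `ℤ` as base ring makes it
independent of any algebra structure on `B`. -/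
instance decompositionAction : MulSemiringAction (stabilizer G Q) (B ⧸ Q) :=
  MulSemiringAction.compHom _ (Ideal.Quotient.stabilizerHom Q (Q.under ℤ) G)

theorem stabilizer_smul_quotient_mk (σ : stabilizer G Q) (b : B) :
    σ • Ideal.Quotient.mk Q b = Ideal.Quotient.mk Q ((σ : G) • b) :=
  rfl

variable [Q.IsMaximal]

theorem isMaximal_smul (σ : G) : (σ • Q).IsMaximal := by
  rw [Ideal.pointwise_smul_eq_comap]
  exact Ideal.comap_isMaximal_of_equiv _

theorem pairwise_isCoprime_orbit :
    Pairwise (Function.onFun IsCoprime fun I : MulAction.orbit G Q ↦ (I : Ideal B)) := by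
  rintro ⟨_, σ, rfl⟩ ⟨_, τ, rfl⟩ hne
  exact Ideal.isCoprime_iff_sup_eq.mpr <|
    (isMaximal_smul Q σ).coprime_of_ne (isMaximal_smul Q τ) (Subtype.coe_ne_coe.mpr hne)

theorem exists_mk_eq_and_forall_smul_mem [Finite G] (x : B ⧸ Q) :
    ∃ b : B, Ideal.Quotient.mk Q b = x ∧ ∀ σ : G, σ • Q ≠ Q → σ • b ∈ Q := by
  classical
  have : Finite (MulAction.orbit G Q) := Set.finite_range _
  obtain ⟨r, rfl⟩ := Ideal.Quotient.mk_surjective x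
  obtain ⟨b, hb⟩ := Ideal.exists_forall_sub_mem_ideal (pairwise_isCoprime_orbit (G := G) Q)
    fun I ↦ if (I : Ideal B) = Q then r else 0
  refine ⟨b, Ideal.Quotient.eq.mpr ?_, fun σ hσ ↦ Ideal.mem_inv_pointwise_smul_iff.mp ?_⟩
  · simpa using hb ⟨Q, MulAction.mem_orbit_self Q⟩
  · simpa [inv_smul_eq_iff, hσ.symm] using hb ⟨σ⁻¹ • Q, MulAction.mem_orbit Q σ⁻¹⟩

theorem exists_mk_sum_smul_eq [Fintype G] (x : B ⧸ Q) (hx : ∀ σ : stabilizer G Q, σ • x = x) :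
    ∃ b : B, Ideal.Quotient.mk Q (∑ σ : G, σ • b) = Nat.card (stabilizer G Q) * x := by
  classical
  obtain ⟨b, rfl, hb⟩ := exists_mk_eq_and_forall_smul_mem (G := G) Q x
  have mk_smul (σ : G) : Ideal.Quotient.mk Q (σ • b) =
      if σ ∈ stabilizer G Q then Ideal.Quotient.mk Q b else 0 := by
    split_ifs with hσ
    · rw [← stabilizer_smul_quotient_mk Q ⟨σ, hσ⟩, hx]
    · exact Ideal.Quotient.eq_zero_iff_mem.mpr (hb σ hσ)
  refine ⟨b, ?_⟩
  simp [mk_smul, Finset.sum_ite, Fintype.card_subtype]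

theorem isInvariant_quotient (A : Type*) [CommSemiring A] [Algebra A B] [Finite G]
    [Algebra.IsInvariant A B G] (hD : (Nat.card (stabilizer G Q) : B ⧸ Q) ≠ 0) :
    Algebra.IsInvariant A (B ⧸ Q) (stabilizer G Q) := by
  let := Ideal.Quotient.field Q
  cases nonempty_fintype G
  refine ⟨fun x hx ↦ ?_⟩
  obtain ⟨b, hb⟩ := exists_mk_sum_smul_eq Q ((Nat.card (stabilizer G Q) : B ⧸ Q)⁻¹ * x) fun σ ↦ by
    have smul_card : σ • (Nat.card (stabilizer G Q) : B ⧸ Q) = Nat.card (stabilizer G Q) :=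
      map_natCast (MulSemiringAction.toRingHom (stabilizer G Q) (B ⧸ Q) σ) _
    rw [smul_mul', smul_inv'', smul_card, hx]
  obtain ⟨a, ha⟩ := Algebra.IsInvariant.isInvariant (A := A) (G := G) (∑ σ : G, σ • b)
    fun σ ↦ smul_sum_smul σ b
  refine ⟨a, ?_⟩
  rw [mul_inv_cancel_left₀ hD] at hb
  rw [IsScalarTower.algebraMap_apply A B, ha, ← hb]
  rfl

theorem moduleFinite_quotient_of_isUnit_card (A : Type*) [CommSemiring A] [Algebra A B] [Finite G]
    [Algebra.IsInvariant A B G] (hG : IsUnit (Nat.card G : B)) :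
    Module.Finite A (B ⧸ Q) := by
  let := Ideal.Quotient.field Q
  have hD : (Nat.card (stabilizer G Q) : B ⧸ Q) ≠ 0 := by
    have := (hG.map (Ideal.Quotient.mk Q)).ne_zero
    rw [map_natCast, ← (stabilizer G Q).card_mul_index, Nat.cast_mul] at this
    exact left_ne_zero_of_mul this
  have := isInvariant_quotient Q A hD
  exact moduleFinite_of_isInvariant_field A (B ⧸ Q) (stabilizer G Q)

end MaximalIdeal

theorem finite_over_invariants_of_finite_length_general {A B G E : Type*} [CommRing A] [CommRing B]
    [Algebra A B] [Group G] [Finite G] [MulSemiringAction G B] [Algebra.IsInvariant A B G]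
    (hG : IsUnit (Nat.card G : B)) [AddCommGroup E] [Module B E] [Module A E]
    [IsScalarTower A B E] (hE : IsFiniteLength B E) : Module.Finite A E :=
  moduleFinite_of_isFiniteLength (fun Q _ ↦ moduleFinite_quotient_of_isUnit_card Q A hG) hE

/-- If `R` is a complete Noetherian local ring with a finite group `G` acting by ring
automorphisms and `|G|` invertible in `R`, then every `R`-module `E` of finite length
is finitely generated as a module over the invariant subring `R^G` (via restriction of
scalars). -/
theorem finite_over_invariants_of_finite_length
    (R : Type) [CommRing R] [IsNoetherianRing R] [IsLocalRing R]
    [IsAdicComplete (IsLocalRing.maximalIdeal R) R]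
    (G : Type) [Group G] [Fintype G] [MulSemiringAction G R]
    (hG : IsUnit ((Fintype.card G : R)))
    (E : Type) [AddCommGroup E] [Module R E] (hE : IsFiniteLength R E) :
    Module.Finite (fixedSubring G R) E := by
  exact finite_over_invariants_of_finite_length_general (Nat.card_eq_fintype_card (α := G) ▸ hG) hE
end
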